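/- arXiv:2605.09828 — 5 statements merged into one kernel-verified Lean document; each statement's English description precedes it below -/
import Mathlib

section
/- For every λ ∈ K and every i ∈ {1, …, n}, the subspaces 𝔨 and 𝔩 of V^n are invariant under the endomorphism c_λ(A)_i; consequently each c_λ(A)_i induces a well-defined endomorphism of the quotient space V^n/(𝔨 + 𝔩). -/
/-! Dettweiler–Reiter convolution and middle convolution, in linear-algebra form.
`V^n` is modelled as `Fin n → V`. -/

/-- The Dettweiler–Reiter convolution endomorphism `c_λ(A)_i` of `V^n`, defined by
`(c_λ(A)_i w)_i = A_1 w_1 + ⋯ + A_n w_n + λ w_i` and `(c_λ(A)_i w)_k = 0` for `k ≠ i`. -/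
noncomputable def cDR {K : Type*} [Field K] {V : Type*} [AddCommGroup V] [Module K V]
    {n : ℕ} (lam : K) (A : Fin n → Module.End K V) (i : Fin n) :
    Module.End K (Fin n → V) :=
  (LinearMap.single K (fun _ : Fin n => V) i).comp
    ((∑ j, (A j).comp (LinearMap.proj j)) + lam • LinearMap.proj i)

/-- The subspace `𝔨 = {w ∈ V^n : A_i w_i = 0 for all i}`. -/
def kSub {K : Type*} [Field K] {V : Type*} [AddCommGroup V] [Module K V]
    {n : ℕ} (A : Fin n → Module.End K V) : Submodule K (Fin n → V) :=
  ⨅ i, LinearMap.ker ((A i).comp (LinearMap.proj i))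

/-- The subspace `𝔩 = ⋂_{i=1}^n ker c_λ(A)_i`. -/
noncomputable def lSub {K : Type*} [Field K] {V : Type*} [AddCommGroup V] [Module K V]
    {n : ℕ} (lam : K) (A : Fin n → Module.End K V) : Submodule K (Fin n → V) :=
  ⨅ i, LinearMap.ker (cDR lam A i)

/-- The underlying space `V^n/(𝔨 + 𝔩)` of the middle convolution `mc_λ(V; A)`. -/
noncomputable abbrev mcSpace {K : Type*} [Field K] {V : Type*} [AddCommGroup V] [Module K V]
    {n : ℕ} (lam : K) (A : Fin n → Module.End K V) :=
  (Fin n → V) ⧸ (kSub A ⊔ lSub lam A)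

/-- `e` is the endomorphism `mc_λ(A)_i` of `V^n/(𝔨 + 𝔩)` induced by `c_λ(A)_i`,
characterised by `e ∘ mkQ = mkQ ∘ c_λ(A)_i`. -/
noncomputable def IsInducedEnd {K : Type*} [Field K] {V : Type*} [AddCommGroup V] [Module K V]
    {n : ℕ} (lam : K) (A : Fin n → Module.End K V) (i : Fin n)
    (e : Module.End K (mcSpace lam A)) : Prop :=
  e.comp (kSub A ⊔ lSub lam A).mkQ = (kSub A ⊔ lSub lam A).mkQ.comp (cDR lam A i)
/-- For every `λ ∈ K` and `i`, the subspaces `𝔨` and `𝔩` of `V^n` are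
invariant under `c_λ(A)_i`; consequently `c_λ(A)_i` induces a well-defined endomorphism of
the quotient `V^n/(𝔨 + 𝔩)`. -/
theorem kSub_lSub_invariant_and_induced_end
    {K : Type*} [Field K] {V : Type*} [AddCommGroup V] [Module K V] [FiniteDimensional K V]
    {n : ℕ} (hn : 1 ≤ n) (A : Fin n → Module.End K V) (lam : K) (i : Fin n) :
    Submodule.map (cDR lam A i) (kSub A) ≤ kSub A ∧
    Submodule.map (cDR lam A i) (lSub lam A) ≤ lSub lam A ∧
    ∃ e : Module.End K (mcSpace lam A), IsInducedEnd lam A i e := by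
  have hk : Submodule.map (cDR lam A i) (kSub A) ≤ kSub A := by
    rintro _ ⟨w, hw, rfl⟩
    have hw' : ∀ j, A j (w j) = 0 := by
      simpa [kSub, Submodule.mem_iInf] using hw
    simp only [kSub, Submodule.mem_iInf, LinearMap.mem_ker]
    intro j
    by_cases h : j = i
    · subst h
      simp [cDR, hw']
    · simp [cDR, h]
  have hl : Submodule.map (cDR lam A i) (lSub lam A) ≤ lSub lam A := by
    rintro _ ⟨w, hw, rfl⟩
    have hw' : ∀ j, cDR lam A j w = 0 := by
      simpa only [lSub, Submodule.mem_iInf, LinearMap.mem_ker, SetLike.mem_coe] using hw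
    rw [hw' i]
    exact Submodule.zero_mem _
  refine ⟨hk, hl, ?_⟩
  have hs : kSub A ⊔ lSub lam A ≤ (kSub A ⊔ lSub lam A).comap (cDR lam A i) := by
    rw [← Submodule.map_le_iff_le_comap, Submodule.map_sup]
    exact sup_le_sup hk hl
  exact ⟨Submodule.mapQ _ _ (cDR lam A i) hs, Submodule.mapQ_mkQ _ _ _⟩
end

section
/- If λ ≠ 0, then the joint kernel 𝔩 = ⋂_{i=1}^n ker c_λ(A)_i consists exactly of the constant tuples with entry in the kernel of A_1 + ⋯ + A_n + λ·id_V; that is, the diagonal map v ↦ (v, v, …, v) is a K-linear isomorphism from ker(A_1 + ⋯ + A_n + λ·id_V) onto 𝔩. -/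
/-- If `λ ≠ 0`, the joint kernel `𝔩 = ⋂ ker c_λ(A)_i` consists exactly of
the constant tuples with entry in `ker(A_1 + ⋯ + A_n + λ·id_V)`; i.e. the diagonal map
`v ↦ (v, …, v)` is a `K`-linear isomorphism from `ker(A_1 + ⋯ + A_n + λ·id_V)` onto `𝔩`. -/
theorem lSub_eq_diagonal_of_ne_zero
    {K : Type*} [Field K] {V : Type*} [AddCommGroup V] [Module K V] [FiniteDimensional K V]
    {n : ℕ} (hn : 1 ≤ n) (A : Fin n → Module.End K V) (lam : K) (hlam : lam ≠ 0) :
    Function.Injective (LinearMap.pi fun _ : Fin n => (LinearMap.id : V →ₗ[K] V)) ∧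
    Submodule.map (LinearMap.pi fun _ : Fin n => (LinearMap.id : V →ₗ[K] V))
        (LinearMap.ker ((∑ i, A i) + lam • (1 : Module.End K V))) =
      lSub lam A := by
  have key : ∀ w : Fin n → V, w ∈ lSub lam A ↔ ∀ i, (∑ j, A j (w j)) + lam • w i = 0 := by
    intro w
    simp only [lSub, Submodule.mem_iInf, LinearMap.mem_ker]
    refine forall_congr' fun i => ?_
    have h : cDR lam A i w = Pi.single i ((∑ j, A j (w j)) + lam • w i) := by
      simp [cDR, LinearMap.sum_apply]
    rw [h, Pi.single_eq_zero_iff]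
  refine ⟨fun v w h => congrFun h ⟨0, hn⟩, ?_⟩
  ext w
  rw [key, Submodule.mem_map]
  constructor
  · rintro ⟨v, hv, rfl⟩ i
    simpa [LinearMap.sum_apply] using hv
  · intro h
    have hc : ∀ i, w ⟨0, hn⟩ = w i := fun i =>
      smul_right_injective V hlam (add_left_cancel ((h ⟨0, hn⟩).trans (h i).symm))
    refine ⟨w ⟨0, hn⟩, ?_, funext hc⟩
    have h0 := h ⟨0, hn⟩
    simp only [← hc] at h0
    simpa [LinearMap.sum_apply] using h0
end

section
/- Let λ = 0 and let φ : V^n → V be the K-linear map φ(w) = A_1 w_1 + ⋯ + A_n w_n. Then φ ∘ c_0(A)_i = A_i ∘ φ for every i, and φ vanishes on 𝔨 + 𝔩; hence φ induces a K-linear map φ̄ : mc_0(V; A) → V satisfying φ̄ ∘ mc_0(A)_i = A_i ∘ φ̄ for every i. If (V; A) satisfies conditions (∗) and (∗∗), then φ̄ is a K-linear isomorphism. -/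
/-- Condition (∗): for every `i` and `τ ∈ K`,
`ker(A_i − τ·id_V) ∩ ⋂_{j ≠ i} ker A_j = {0}`. -/
def StarKer {K : Type*} [Field K] {V : Type*} [AddCommGroup V] [Module K V]
    {n : ℕ} (A : Fin n → Module.End K V) : Prop :=
  ∀ (i : Fin n) (τ : K),
    LinearMap.ker (A i - τ • (1 : Module.End K V)) ⊓
      (⨅ j, ⨅ _ : j ≠ i, LinearMap.ker (A j)) = ⊥

/-- Condition (∗∗): for every `i` and `τ ∈ K`,
`range(A_i − τ·id_V) + Σ_{j ≠ i} range A_j = V`. -/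
def StarIm {K : Type*} [Field K] {V : Type*} [AddCommGroup V] [Module K V]
    {n : ℕ} (A : Fin n → Module.End K V) : Prop :=
  ∀ (i : Fin n) (τ : K),
    LinearMap.range (A i - τ • (1 : Module.End K V)) ⊔
      (⨆ j, ⨆ _ : j ≠ i, LinearMap.range (A j)) = ⊤
/-- Let `λ = 0` and `φ : V^n → V`, `φ(w) = A_1 w_1 + ⋯ + A_n w_n`.
Then `φ ∘ c_0(A)_i = A_i ∘ φ` for every `i`, and `φ` vanishes on `𝔨 + 𝔩`; hence `φ`
induces a `K`-linear map `φ̄ : mc_0(V; A) → V` with `φ̄ ∘ mc_0(A)_i = A_i ∘ φ̄` for every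
`i`.  If `(V; A)` satisfies (∗) and (∗∗), then `φ̄` is an isomorphism. -/
theorem mc_zero_comparison_map
    {K : Type*} [Field K] {V : Type*} [AddCommGroup V] [Module K V] [FiniteDimensional K V]
    {n : ℕ} (hn : 1 ≤ n) (A : Fin n → Module.End K V) :
    (∀ i, (∑ j, (A j).comp (LinearMap.proj j)).comp (cDR 0 A i) =
        (A i).comp (∑ j, (A j).comp (LinearMap.proj j))) ∧
    (kSub A ⊔ lSub (0 : K) A ≤ LinearMap.ker (∑ j, (A j).comp (LinearMap.proj j))) ∧
    ∃ φbar : mcSpace (0 : K) A →ₗ[K] V,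
      φbar.comp (kSub A ⊔ lSub (0 : K) A).mkQ = (∑ j, (A j).comp (LinearMap.proj j)) ∧
      (∀ (i : Fin n) (e : Module.End K (mcSpace (0 : K) A)),
        IsInducedEnd 0 A i e → φbar.comp e = (A i).comp φbar) ∧
      (StarKer A → StarIm A → Function.Bijective φbar) := by
  have hc : ∀ i, cDR (0 : K) A i = (LinearMap.single K (fun _ : Fin n => V) i).comp
      (∑ j, (A j).comp (LinearMap.proj j)) := by
    intro i
    simp [cDR]
  have h1 : ∀ i, (∑ j, (A j).comp (LinearMap.proj j)).comp (cDR 0 A i) =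
        (A i).comp (∑ j, (A j).comp (LinearMap.proj j)) := by
    intro i
    rw [hc, ← LinearMap.comp_assoc]
    congr 1
    ext v
    simp only [LinearMap.comp_apply, LinearMap.sum_apply, LinearMap.proj_apply,
      LinearMap.single_apply]
    rw [Finset.sum_eq_single i]
    · simp
    · intro b _ hb
      simp [Pi.single_eq_of_ne hb]
    · simp
  have hl : lSub (0 : K) A = LinearMap.ker (∑ j, (A j).comp (LinearMap.proj j)) := by
    ext w
    simp only [lSub, Submodule.mem_iInf, LinearMap.mem_ker, hc, LinearMap.comp_apply,
      LinearMap.single_apply, Pi.single_eq_zero_iff]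
    exact ⟨fun h => h ⟨0, hn⟩, fun h _ => h⟩
  have h2 : kSub A ⊔ lSub (0 : K) A ≤ LinearMap.ker (∑ j, (A j).comp (LinearMap.proj j)) := by
    refine sup_le ?_ hl.le
    intro w hw
    simp only [kSub, Submodule.mem_iInf, LinearMap.mem_ker, LinearMap.comp_apply] at hw
    simp only [LinearMap.mem_ker, LinearMap.sum_apply, LinearMap.comp_apply]
    exact Finset.sum_eq_zero fun i _ => hw i
  refine ⟨h1, h2, (kSub A ⊔ lSub (0 : K) A).liftQ _ h2, Submodule.liftQ_mkQ _ _ _, ?_, ?_⟩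
  · intro i e he
    apply Submodule.linearMap_qext
    unfold IsInducedEnd at he
    rw [LinearMap.comp_assoc, he, ← LinearMap.comp_assoc, Submodule.liftQ_mkQ, h1,
      LinearMap.comp_assoc, Submodule.liftQ_mkQ]
  · intro _ hs
    constructor
    · rw [← LinearMap.ker_eq_bot]
      apply Submodule.ker_liftQ_eq_bot
      exact hl.ge.trans le_sup_right
    · rw [← LinearMap.range_eq_top, Submodule.range_liftQ, eq_top_iff, ← hs ⟨0, hn⟩ 0]
      have hr : ∀ j, LinearMap.range (A j) ≤
          LinearMap.range (∑ j, (A j).comp (LinearMap.proj j) : (Fin n → V) →ₗ[K] V) := by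
        rintro j _ ⟨v, rfl⟩
        refine ⟨Pi.single j v, ?_⟩
        simp only [LinearMap.comp_apply, LinearMap.sum_apply, LinearMap.proj_apply]
        rw [Finset.sum_eq_single j]
        · simp
        · intro b _ hb
          simp [Pi.single_eq_of_ne hb]
        · simp
      refine sup_le ?_ (iSup_le fun j => iSup_le fun _ => hr j)
      rw [zero_smul, sub_zero]
      exact hr _
end

section
/- Assume (V; A) satisfies conditions (∗) and (∗∗), and let λ, μ ∈ K. Write mc_μ(V; A) = (V'; A') where V' = V^n/(𝔨 + 𝔩) (formed with parameter μ) and A'_i = mc_μ(A)_i. Then there exists a K-linear isomorphism T : mc_λ(V'; A') → mc_{λ+μ}(V; A) such that T ∘ mc_λ(A')_i = mc_{λ+μ}(A)_i ∘ T for every i ∈ {1, …, n}; moreover there exists a K-linear isomorphism S : mc_0(V; A) → V with S ∘ mc_0(A)_i = A_i ∘ S for every i. -/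
section helpers
variable {K : Type*} [Field K] {V : Type*} [AddCommGroup V] [Module K V] {n : ℕ}

theorem cDR_apply (lam : K) (A : Fin n → Module.End K V) (i : Fin n) (w : Fin n → V) :
    cDR lam A i w = Pi.single i ((∑ j, A j (w j)) + lam • w i) := by
  simp [cDR, LinearMap.sum_apply]

theorem mem_kSub (A : Fin n → Module.End K V) (w : Fin n → V) :
    w ∈ kSub A ↔ ∀ i, A i (w i) = 0 := by
  simp [kSub, Submodule.mem_iInf]

theorem mem_lSub (lam : K) (A : Fin n → Module.End K V) (w : Fin n → V) :
    w ∈ lSub lam A ↔ ∀ i, (∑ j, A j (w j)) + lam • w i = 0 := by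
  simp [lSub, Submodule.mem_iInf, cDR_apply]

theorem starKer_elim {A : Fin n → Module.End K V} (h : StarKer A) (i : Fin n) (τ : K) (x : V)
    (h1 : A i x = τ • x) (h2 : ∀ j, j ≠ i → A j x = 0) : x = 0 := by
  have := h i τ
  rw [← Submodule.mem_bot K, ← this]
  simp only [Submodule.mem_inf, Submodule.mem_iInf, LinearMap.mem_ker]
  refine ⟨?_, h2⟩
  simp [h1]

theorem starIm_elim {A : Fin n → Module.End K V} (h : StarIm A) (i : Fin n) (mu : K) (v : V) :
    ∃ u : Fin n → V, (∑ j, A j (u j)) + mu • u i = v := by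
  let g : (Fin n → V) →ₗ[K] V := (∑ j, (A j).comp (LinearMap.proj j)) + mu • LinearMap.proj i
  have hg : ∀ u, g u = (∑ j, A j (u j)) + mu • u i := by
    intro u; simp [g, LinearMap.sum_apply]
  have hs : ∀ j x, (∑ l, A l ((Pi.single j x : Fin n → V) l)) = A j x := by
    intro j x
    rw [Finset.sum_eq_single j]
    · simp
    · intro b _ hb
      simp [Pi.single_eq_of_ne hb]
    · simp
  have hr : LinearMap.range g = ⊤ := by
    rw [eq_top_iff, ← h i (-mu)]
    refine sup_le ?_ (iSup_le fun j => iSup_le fun hj => ?_)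
    · rintro _ ⟨x, rfl⟩
      refine ⟨Pi.single i x, ?_⟩
      rw [hg, hs]; simp
    · rintro _ ⟨x, rfl⟩
      refine ⟨Pi.single j x, ?_⟩
      rw [hg, hs]; simp [Pi.single_eq_of_ne (Ne.symm hj)]
  obtain ⟨u, hu⟩ := LinearMap.range_eq_top.1 hr v
  exact ⟨u, by rw [← hg, hu]⟩

theorem exists_equiv_of_ker_eq {M N P : Type*} [AddCommGroup M] [Module K M] [AddCommGroup N]
    [Module K N] [AddCommGroup P] [Module K P] (f : M →ₗ[K] N) (g : M →ₗ[K] P)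
    (hf : Function.Surjective f) (hg : Function.Surjective g)
    (h : LinearMap.ker f = LinearMap.ker g) : ∃ T : N ≃ₗ[K] P, ∀ m, T (f m) = g m := by
  refine ⟨(f.quotKerEquivOfSurjective hf).symm.trans
    ((Submodule.quotEquivOfEq _ _ h).trans (g.quotKerEquivOfSurjective hg)), fun m => ?_⟩
  have : (f.quotKerEquivOfSurjective hf).symm (f m) = Submodule.Quotient.mk m := by
    rw [LinearEquiv.symm_apply_eq]; rfl
  simp only [LinearEquiv.trans_apply, this, Submodule.quotEquivOfEq_mk]
  rfl

/-- The map `(w_1, …, w_n) ↦ Σ c_μ(A)_j w_j`. -/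
noncomputable def phiMap (mu : K) (A : Fin n → Module.End K V) :
    (Fin n → Fin n → V) →ₗ[K] (Fin n → V) :=
  ∑ j, (cDR mu A j).comp (LinearMap.proj j)

theorem phiMap_sum (mu : K) (A : Fin n → Module.End K V) (w : Fin n → Fin n → V) :
    phiMap mu A w = ∑ j, cDR mu A j (w j) := by
  simp [phiMap, LinearMap.sum_apply]

theorem phiMap_apply (mu : K) (A : Fin n → Module.End K V) (w : Fin n → Fin n → V) (i : Fin n) :
    phiMap mu A w i = (∑ j, A j (w i j)) + mu • w i i := by
  rw [phiMap_sum, Finset.sum_apply, Finset.sum_eq_single i]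
  · simp [cDR_apply]
  · intro b _ hb
    simp [cDR_apply, Pi.single_eq_of_ne (Ne.symm hb)]
  · simp

theorem cDR_eq_single_phi (mu : K) (A : Fin n → Module.End K V) (w : Fin n → Fin n → V)
    (i : Fin n) : cDR mu A i (w i) = Pi.single i (phiMap mu A w i) := by
  rw [phiMap_apply, cDR_apply]

theorem phiMap_surj {A : Fin n → Module.End K V} (h : StarIm A) (mu : K) :
    Function.Surjective (phiMap mu A) := by
  intro y
  choose u hu using fun i => starIm_elim h i mu (y i)
  exact ⟨u, funext fun i => by rw [phiMap_apply, hu]⟩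

theorem phiMap_intertwine (lam mu : K) (A : Fin n → Module.End K V) (i : Fin n)
    (w : Fin n → Fin n → V) :
    phiMap mu A (cDR lam (cDR mu A) i w) = cDR (lam + mu) A i (phiMap mu A w) := by
  have h1 : phiMap mu A (cDR lam (cDR mu A) i w)
      = cDR mu A i (phiMap mu A w + lam • w i) := by
    rw [phiMap_sum, cDR_apply, Finset.sum_eq_single i]
    · rw [Pi.single_eq_same, phiMap_sum]
    · intro b _ hb
      simp [Pi.single_eq_of_ne hb]
    · simp
  rw [h1, map_add, map_smul, cDR_eq_single_phi, cDR_apply, cDR_apply, ← Pi.single_smul,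
    ← Pi.single_add, add_smul]
  congr 1
  abel

theorem single_mem {A : Fin n → Module.End K V} (h : StarKer A) (mu : K) (i : Fin n) (v : V) :
    Pi.single i v ∈ kSub A ⊔ lSub mu A ↔ A i v = 0 := by
  constructor
  · intro hv
    obtain ⟨k, hk, l, hl, hkl⟩ := Submodule.mem_sup.1 hv
    rw [mem_kSub] at hk
    rw [mem_lSub] at hl
    have hA : ∀ j, A j (l j) = A j ((Pi.single i v : Fin n → V) j) := by
      intro j
      rw [← hkl, Pi.add_apply, map_add, hk, zero_add]
    have hS : (∑ j, A j (l j)) = A i v := by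
      rw [Finset.sum_eq_single i]
      · rw [hA]; simp
      · intro b _ hb
        rw [hA]; simp [Pi.single_eq_of_ne hb]
      · simp
    rw [hS] at hl
    by_cases hmu : mu = 0
    · simpa [hmu] using hl i
    · have hle : ∀ j, l j = l i := by
        intro j
        have := (hl j).trans (hl i).symm
        exact smul_right_injective V hmu (add_left_cancel this)
      have hx : l i = 0 := by
        refine starKer_elim h i (-mu) _ ?_ ?_
        · rw [hA, Pi.single_eq_same, neg_smul]
          exact eq_neg_of_add_eq_zero_left (hl i)
        · intro j hj
          rw [← hle j, hA, Pi.single_eq_of_ne hj, map_zero]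
      simpa [hx] using hl i
  · intro hv
    refine Submodule.mem_sup_left ((mem_kSub _ _).2 fun j => ?_)
    by_cases hj : j = i
    · subst hj; simpa using hv
    · simp [Pi.single_eq_of_ne hj]

theorem phi_mem_of_L (hn : 1 ≤ n) {A : Fin n → Module.End K V} (h : StarKer A) (lam mu : K)
    (w : Fin n → Fin n → V)
    (hw : ∀ i, phiMap mu A w + lam • w i ∈ kSub A ⊔ lSub mu A) :
    phiMap mu A w ∈ kSub A ⊔ lSub (lam + mu) A := by
  set y := phiMap mu A w with hy
  have hz : ∀ i, A i ((∑ j, A j (y j)) + (lam + mu) • y i) = 0 := by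
    intro i
    obtain ⟨k, hk, l, hl, hkl⟩ := Submodule.mem_sup.1 (hw i)
    rw [mem_kSub] at hk
    rw [mem_lSub] at hl
    have h1 : (∑ j, A j ((y + lam • w i) j)) + mu • (y + lam • w i) i = mu • k i := by
      rw [← hkl]
      simp only [Pi.add_apply, map_add, hk, zero_add, smul_add]
      rw [add_left_comm, hl i, add_zero]
    have h2 : (∑ j, A j ((y + lam • w i) j)) + mu • (y + lam • w i) i
        = (∑ j, A j (y j)) + (lam + mu) • y i := by
      have h3 := phiMap_apply mu A w i
      rw [← hy] at h3
      simp only [Pi.add_apply, Pi.smul_apply, map_add, map_smul, Finset.sum_add_distrib,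
        ← Finset.smul_sum]
      have h4 : lam • y i = lam • (∑ j, A j (w i j)) + mu • lam • w i i := by
        rw [h3, smul_add, smul_comm mu lam]
      rw [add_smul lam mu (y i), h4, smul_add]
      abel
    rw [← h2, h1, map_smul, hk, smul_zero]
  by_cases hlm : lam + mu = 0
  · refine Submodule.mem_sup_right ((mem_lSub _ _ _).2 fun i => ?_)
    simp only [hlm, zero_smul, add_zero] at hz ⊢
    exact starKer_elim h ⟨0, hn⟩ 0 _ (by rw [hz, zero_smul]) (fun j _ => hz j)
  · let z : Fin n → V := fun i => (lam + mu)⁻¹ • ((∑ j, A j (y j)) + (lam + mu) • y i)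
    have hzk : ∀ i, A i (z i) = 0 := fun i => by simp only [z]; rw [map_smul, hz, smul_zero]
    refine Submodule.mem_sup.2 ⟨z, (mem_kSub _ _).2 hzk, y - z, (mem_lSub _ _ _).2 fun i => ?_,
      by abel⟩
    simp only [Pi.sub_apply, map_sub, hzk, sub_zero, smul_sub]
    simp only [z]
    rw [smul_inv_smul₀ hlm]
    abel

theorem exists_L {A : Fin n → Module.End K V} (h : StarIm A) (lam mu : K)
    (y : Fin n → V) (hy : y ∈ lSub (lam + mu) A) :
    ∃ w, phiMap mu A w = y ∧ ∀ i, phiMap mu A w + lam • w i ∈ kSub A ⊔ lSub mu A := by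
  by_cases hl : lam = 0
  · subst hl
    obtain ⟨w, hw⟩ := phiMap_surj h mu y
    refine ⟨w, hw, fun i => Submodule.mem_sup_right ?_⟩
    rw [hw]
    simpa using hy
  · have hw : phiMap mu A (fun _ => -(lam⁻¹ • y)) = y := by
      funext i
      rw [phiMap_apply]
      have := (mem_lSub _ _ _).1 hy i
      simp only [Pi.neg_apply, Pi.smul_apply, map_neg, map_smul, Finset.sum_neg_distrib,
        ← Finset.smul_sum, smul_neg]
      rw [add_smul, add_left_comm, ← eq_neg_iff_add_eq_zero] at this
      rw [smul_comm mu, ← neg_add, ← smul_add, ← neg_eq_iff_eq_neg.2 this, smul_neg, neg_neg,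
        inv_smul_smul₀ hl]
    refine ⟨_, hw, fun i => ?_⟩
    rw [hw, smul_neg, smul_inv_smul₀ hl, add_neg_cancel]
    exact Submodule.zero_mem _

end helpers

/-- **composition law.** Assume `(V; A)` satisfies (∗) and (∗∗), and let
`λ, μ ∈ K`.  Write `mc_μ(V; A) = (V'; A')`, where `V' = V^n/(𝔨 + 𝔩)` (formed with
parameter `μ`) and the `A'_i` are the induced endomorphisms. Then there is a `K`-linear
isomorphism `T : mc_λ(V'; A') ≃ mc_{λ+μ}(V; A)` intertwining `mc_λ(A')_i` with
`mc_{λ+μ}(A)_i`; moreover there is a `K`-linear isomorphism `S : mc_0(V; A) ≃ V` with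
`S ∘ mc_0(A)_i = A_i ∘ S` for every `i`. -/
theorem mc_composition_law
    {K : Type*} [Field K] {V : Type*} [AddCommGroup V] [Module K V] [FiniteDimensional K V]
    {n : ℕ} (hn : 1 ≤ n) (A : Fin n → Module.End K V)
    (hker : StarKer A) (him : StarIm A) (lam mu : K)
    (A' : Fin n → Module.End K (mcSpace mu A))
    (hA' : ∀ i, IsInducedEnd mu A i (A' i)) :
    (∃ T : mcSpace lam A' ≃ₗ[K] mcSpace (lam + mu) A,
      ∀ (i : Fin n) (e : Module.End K (mcSpace lam A'))
        (e' : Module.End K (mcSpace (lam + mu) A)),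
        IsInducedEnd lam A' i e → IsInducedEnd (lam + mu) A i e' →
          T.toLinearMap.comp e = e'.comp T.toLinearMap) ∧
    (∃ S : mcSpace (0 : K) A ≃ₗ[K] V,
      ∀ (i : Fin n) (e : Module.End K (mcSpace (0 : K) A)),
        IsInducedEnd 0 A i e → S.toLinearMap.comp e = (A i).comp S.toLinearMap) := by
  have hA : ∀ i w, A' i ((kSub A ⊔ lSub mu A).mkQ w)
      = (kSub A ⊔ lSub mu A).mkQ (cDR mu A i w) := fun i w => LinearMap.congr_fun (hA' i) w
  let P : (Fin n → Fin n → V) →ₗ[K] (Fin n → mcSpace mu A) :=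
    (kSub A ⊔ lSub mu A).mkQ.compLeft (Fin n)
  have hP : ∀ w i, P w i = (kSub A ⊔ lSub mu A).mkQ (w i) := fun w i => rfl
  have hPs : Function.Surjective P := by
    intro v
    choose u hu using fun i => (kSub A ⊔ lSub mu A).mkQ_surjective (v i)
    exact ⟨u, funext hu⟩
  have hPsum : ∀ w, (∑ j, A' j (P w j)) = (kSub A ⊔ lSub mu A).mkQ (phiMap mu A w) := by
    intro w
    rw [phiMap_sum, map_sum]
    exact Finset.sum_congr rfl fun j _ => by rw [hP, hA]
  have hPc : ∀ i w, P (cDR lam (cDR mu A) i w) = cDR lam A' i (P w) := by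
    intro i w
    rw [cDR_apply, cDR_apply, hPsum, hP, ← map_smul, ← map_add, phiMap_sum]
    funext j
    rw [hP]
    by_cases hj : j = i
    · subst hj; simp only [Pi.single_eq_same]
    · simp only [Pi.single_eq_of_ne hj, map_zero]
  have hk : ∀ w, P w ∈ kSub A' ↔ phiMap mu A w ∈ kSub A := by
    intro w
    rw [mem_kSub, mem_kSub]
    refine forall_congr' fun i => ?_
    rw [hP, hA, cDR_eq_single_phi, Submodule.mkQ_apply, Submodule.Quotient.mk_eq_zero,
      single_mem hker]
  have hl : ∀ w, P w ∈ lSub lam A' ↔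
      ∀ i, phiMap mu A w + lam • w i ∈ kSub A ⊔ lSub mu A := by
    intro w
    rw [mem_lSub]
    refine forall_congr' fun i => ?_
    rw [hPsum, hP, ← map_smul, ← map_add, Submodule.mkQ_apply, Submodule.Quotient.mk_eq_zero]
  have hmain : ∀ w, P w ∈ kSub A' ⊔ lSub lam A' ↔
      phiMap mu A w ∈ kSub A ⊔ lSub (lam + mu) A := by
    intro w
    constructor
    · intro hw
      obtain ⟨a, ha, b, hb, hab⟩ := Submodule.mem_sup.1 hw
      obtain ⟨w1, rfl⟩ := hPs a
      have hb' : b = P (w - w1) := by rw [map_sub, ← hab, add_sub_cancel_left]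
      rw [hb', hl] at hb
      have h1 := Submodule.mem_sup_left (T := lSub (lam + mu) A) ((hk w1).1 ha)
      have h2 := phi_mem_of_L hn hker lam mu _ hb
      have h3 := Submodule.add_mem _ h1 h2
      rwa [← map_add, add_sub_cancel] at h3
    · intro hw
      obtain ⟨k, hk1, y, hy, hky⟩ := Submodule.mem_sup.1 hw
      obtain ⟨w2, hw2, hw2l⟩ := exists_L him lam mu y hy
      have h1 : P (w - w2) ∈ kSub A' := by
        rw [hk, map_sub, hw2, ← hky, add_sub_cancel_right]
        exact hk1
      have h3 := Submodule.add_mem_sup h1 ((hl w2).2 hw2l)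
      rwa [← map_add, sub_add_cancel] at h3
  constructor
  · obtain ⟨T, hT⟩ := exists_equiv_of_ker_eq ((kSub A' ⊔ lSub lam A').mkQ.comp P)
      ((kSub A ⊔ lSub (lam + mu) A).mkQ.comp (phiMap mu A))
      ((Submodule.mkQ_surjective _).comp hPs)
      ((Submodule.mkQ_surjective _).comp (phiMap_surj him mu)) (by
        ext w
        simp only [LinearMap.mem_ker, LinearMap.comp_apply, Submodule.mkQ_apply,
          Submodule.Quotient.mk_eq_zero]
        exact hmain w)
    refine ⟨T, fun i e e' he he' => ?_⟩
    refine LinearMap.ext fun x => ?_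
    obtain ⟨v, rfl⟩ := Submodule.mkQ_surjective _ x
    obtain ⟨w, rfl⟩ := hPs v
    have h1 := LinearMap.congr_fun he (P w)
    have h2 := LinearMap.congr_fun he' (phiMap mu A w)
    simp only [LinearMap.comp_apply] at h1 h2 hT
    simp only [LinearMap.comp_apply, LinearEquiv.coe_coe]
    rw [h1, ← hPc, hT, hT, h2, phiMap_intertwine]
  · let g : (Fin n → V) →ₗ[K] V := ∑ j, (A j).comp (LinearMap.proj j)
    have hg : ∀ u, g u = ∑ j, A j (u j) := by
      intro u; simp [g, LinearMap.sum_apply]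
    obtain ⟨S, hS⟩ := exists_equiv_of_ker_eq (kSub A ⊔ lSub (0 : K) A).mkQ g
      (Submodule.mkQ_surjective _) (by
        intro v
        obtain ⟨u, hu⟩ := starIm_elim him ⟨0, hn⟩ 0 v
        exact ⟨u, by rw [hg, ← hu, zero_smul, add_zero]⟩) (by
        rw [Submodule.ker_mkQ]
        apply le_antisymm
        · refine sup_le ?_ ?_
          · intro w hw
            rw [mem_kSub] at hw
            rw [LinearMap.mem_ker, hg]
            exact Finset.sum_eq_zero fun j _ => hw j
          · intro w hw
            rw [mem_lSub] at hw
            rw [LinearMap.mem_ker, hg]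
            simpa using hw ⟨0, hn⟩
        · intro w hw
          rw [LinearMap.mem_ker, hg] at hw
          exact Submodule.mem_sup_right ((mem_lSub _ _ _).2 fun i => by simp [hw]))
    refine ⟨S, fun i e he => ?_⟩
    refine LinearMap.ext fun x => ?_
    obtain ⟨w, rfl⟩ := Submodule.mkQ_surjective _ x
    have h1 := LinearMap.congr_fun he w
    simp only [LinearMap.comp_apply] at h1
    simp only [LinearMap.comp_apply, LinearEquiv.coe_coe]
    rw [h1, hS, hS, hg, hg, cDR_apply, Finset.sum_eq_single i]
    · simp
    · intro b _ hb
      simp [Pi.single_eq_of_ne hb]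
    · simp
end

section
/- Let λ ∈ K with λ ≠ 0. Let W be another finite-dimensional K-vector space with endomorphisms B_1, …, B_n ∈ End_K(W), and let f : V → W be a K-linear map with f ∘ A_i = B_i ∘ f for all i. Then the map f^{⊕n} : V^n → W^n, (w_i)_i ↦ (f(w_i))_i, maps 𝔨_V into 𝔨_W and 𝔩_V into 𝔩_W, and hence induces a K-linear map mc_λ(f) : mc_λ(V; A) → mc_λ(W; B) satisfying mc_λ(f) ∘ mc_λ(A)_i = mc_λ(B)_i ∘ mc_λ(f) for every i. Moreover, if f is injective then mc_λ(f) is injective, and if f is surjective then mc_λ(f) is surjective. -/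
theorem aux_mem_kSub {K : Type*} [Field K] {V : Type*} [AddCommGroup V] [Module K V]
    {n : ℕ} (A : Fin n → Module.End K V) (w : Fin n → V) :
    w ∈ kSub A ↔ ∀ i, A i (w i) = 0 := by
  simp [kSub]

theorem aux_cDR_apply {K : Type*} [Field K] {V : Type*} [AddCommGroup V] [Module K V]
    {n : ℕ} (lam : K) (A : Fin n → Module.End K V) (i : Fin n) (w : Fin n → V) :
    cDR lam A i w = Pi.single i ((∑ j, A j (w j)) + lam • w i) := by
  simp [cDR]

theorem aux_mem_lSub {K : Type*} [Field K] {V : Type*} [AddCommGroup V] [Module K V]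
    {n : ℕ} (lam : K) (A : Fin n → Module.End K V) (w : Fin n → V) :
    w ∈ lSub lam A ↔ ∀ i, (∑ j, A j (w j)) + lam • w i = 0 := by
  simp only [lSub, Submodule.mem_iInf, LinearMap.mem_ker, aux_cDR_apply, Pi.single_eq_zero_iff]

/-- **functoriality of `mc_λ`, `λ ≠ 0`.** Let `f : V → W` intertwine the
tuples `A` and `B` (`f ∘ A_i = B_i ∘ f`).  Then `f^{⊕n} : V^n → W^n` maps `𝔨_V` into
`𝔨_W` and `𝔩_V` into `𝔩_W`, hence induces `mc_λ(f) : mc_λ(V; A) → mc_λ(W; B)`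
intertwining the induced endomorphisms; moreover `mc_λ(f)` is injective (resp.
surjective) whenever `f` is. -/
theorem mc_functoriality
    {K : Type*} [Field K] {V : Type*} [AddCommGroup V] [Module K V] [FiniteDimensional K V]
    {W : Type*} [AddCommGroup W] [Module K W] [FiniteDimensional K W]
    {n : ℕ} (hn : 1 ≤ n) (A : Fin n → Module.End K V) (B : Fin n → Module.End K W)
    (lam : K) (hlam : lam ≠ 0)
    (f : V →ₗ[K] W) (hf : ∀ i, f.comp (A i) = (B i).comp f) :
    Submodule.map (LinearMap.pi fun i : Fin n => f.comp (LinearMap.proj i)) (kSub A) ≤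
      kSub B ∧
    Submodule.map (LinearMap.pi fun i : Fin n => f.comp (LinearMap.proj i)) (lSub lam A) ≤
      lSub lam B ∧
    ∃ g : mcSpace lam A →ₗ[K] mcSpace lam B,
      g.comp (kSub A ⊔ lSub lam A).mkQ =
        ((kSub B ⊔ lSub lam B).mkQ).comp
          (LinearMap.pi fun i : Fin n => f.comp (LinearMap.proj i)) ∧
      (∀ (i : Fin n) (eA : Module.End K (mcSpace lam A)) (eB : Module.End K (mcSpace lam B)),
        IsInducedEnd lam A i eA → IsInducedEnd lam B i eB →
          g.comp eA = eB.comp g) ∧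
      (Function.Injective f → Function.Injective g) ∧
      (Function.Surjective f → Function.Surjective g) := by
  have hf' : ∀ i v, B i (f v) = f (A i v) := fun i v => (LinearMap.congr_fun (hf i) v).symm
  have hk : Submodule.map (LinearMap.pi fun i : Fin n => f.comp (LinearMap.proj i)) (kSub A) ≤
      kSub B := by
    rintro _ ⟨w, hw, rfl⟩
    have hw' := (aux_mem_kSub A w).1 hw
    rw [aux_mem_kSub]
    intro i
    simp [hf', hw' i]
  have hl : Submodule.map (LinearMap.pi fun i : Fin n => f.comp (LinearMap.proj i))
      (lSub lam A) ≤ lSub lam B := by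
    rintro _ ⟨w, hw, rfl⟩
    have hw' := (aux_mem_lSub lam A w).1 hw
    rw [aux_mem_lSub]
    intro i
    have h := congrArg f (hw' i)
    simpa [hf'] using h
  have hle : kSub A ⊔ lSub lam A ≤ (kSub B ⊔ lSub lam B).comap
      (LinearMap.pi fun i : Fin n => f.comp (LinearMap.proj i)) :=
    sup_le (Submodule.map_le_iff_le_comap.1 (hk.trans le_sup_left))
      (Submodule.map_le_iff_le_comap.1 (hl.trans le_sup_right))
  refine ⟨hk, hl, Submodule.mapQ _ _ _ hle, Submodule.mapQ_mkQ _ _ _, ?_, ?_, ?_⟩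
  · intro i eA eB hA hB
    apply LinearMap.ext
    intro x
    obtain ⟨w, rfl⟩ := Submodule.mkQ_surjective _ x
    have h1 : eA (Submodule.mkQ _ w) = Submodule.mkQ _ (cDR lam A i w) :=
      LinearMap.congr_fun hA w
    have h2 : ∀ z, eB (Submodule.mkQ _ z) = Submodule.mkQ _ (cDR lam B i z) :=
      fun z => LinearMap.congr_fun hB z
    rw [LinearMap.comp_apply, LinearMap.comp_apply, h1]
    simp only [Submodule.mkQ_apply, Submodule.mapQ_apply] at h2 ⊢
    rw [h2]
    congr 1
    rw [aux_cDR_apply, aux_cDR_apply]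
    funext k
    by_cases hki : k = i
    · subst hki
      simp [hf']
    · simp [hki]
  · intro hinj
    rw [← LinearMap.ker_eq_bot, LinearMap.ker_eq_bot']
    intro x hx
    obtain ⟨w, rfl⟩ := Submodule.mkQ_surjective _ x
    simp only [Submodule.mkQ_apply, Submodule.mapQ_apply, Submodule.Quotient.mk_eq_zero] at hx ⊢
    obtain ⟨k, hkk, l, hll, hkl⟩ := Submodule.mem_sup.1 hx
    rw [aux_mem_kSub] at hkk
    rw [aux_mem_lSub] at hll
    have hi : ∀ i, k i + l i = f (w i) := fun i => congrFun hkl i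
    have hs : ∑ j, B j (l j) = f (∑ j, A j (w j)) := by
      rw [map_sum]
      refine Finset.sum_congr rfl fun j _ => ?_
      rw [← hf', ← hi, map_add, hkk, zero_add]
    set v : V := -(lam⁻¹ • ∑ j, A j (w j)) with hv
    have hlv : lam • v = - ∑ j, A j (w j) := by
      rw [hv, smul_neg, smul_inv_smul₀ hlam]
    have hlf : ∀ i, l i = f v := by
      intro i
      have h := hll i
      rw [hs] at h
      have h3 : lam • l i = lam • f v := by
        rw [← map_smul, hlv, map_neg]
        exact (neg_eq_of_add_eq_zero_right h).symm
      exact smul_right_injective W hlam h3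
    have hAv : ∀ i, A i (w i - v) = 0 := by
      intro i
      apply hinj
      rw [← hf', map_sub, ← hi, hlf, add_sub_cancel_right, hkk, map_zero]
    refine Submodule.mem_sup.2 ⟨fun i => w i - v, (aux_mem_kSub _ _).2 hAv, fun _ => v,
      (aux_mem_lSub _ _ _).2 fun i => ?_, ?_⟩
    · have : ∑ j, A j v = ∑ j, A j (w j) := by
        refine Finset.sum_congr rfl fun j _ => ?_
        have := hAv j
        rw [map_sub, sub_eq_zero] at this
        exact this.symm
      rw [this, hlv, add_neg_cancel]
    · funext i
      simp
  · intro hsurj y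
    obtain ⟨z, rfl⟩ := Submodule.mkQ_surjective _ y
    choose w hw using fun i => hsurj (z i)
    refine ⟨Submodule.mkQ _ w, ?_⟩
    simp only [Submodule.mkQ_apply, Submodule.mapQ_apply]
    congr 1
    funext i
    exact hw i
end
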